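/- Let X ⊆ P² be a k-configuration of type (d₁,…,d_s) with (d₁,…,d_s) ≠ (1). Then the number of lines L in P² with |L ∩ X| = d_s is at most ΔH_X(d_s − 1) + 1, where ΔH_X is the first difference of the Hilbert function of X. -/

import Mathlib

/-- The projective plane over a field `K`, as the projectivization of `K³`. -/
abbrev P2 (K : Type) [Field K] := Projectivization K (Fin 3 → K)

/-- A line in `P2 K`: a 2-dimensional linear subspace of `K³`. -/
structure ProjLine (K : Type) [Field K] where
  toSubmodule : Submodule K (Fin 3 → K)
  finrank_eq_two : Module.finrank K toSubmodule = 2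

/-- The set of points of `P2 K` lying on a line. -/
def ProjLine.points {K : Type} [Field K] (L : ProjLine K) : Set (P2 K) :=
  {p | p.submodule ≤ L.toSubmodule}

/-- The homogeneous prime ideal of a point of `P2 K`: the ideal generated by
the linear forms vanishing at the point. -/
noncomputable def pointIdeal {K : Type} [Field K] (p : P2 K) :
    Ideal (MvPolynomial (Fin 3) K) :=
  Ideal.span {f | f.IsHomogeneous 1 ∧ MvPolynomial.eval p.rep f = 0}

/-- The defining ideal `I_{mX} = ⋂_{P ∈ X} I_P^m` of the fat point scheme `mX`. -/
noncomputable def fatIdeal {K : Type} [Field K] (X : Set (P2 K)) (m : ℕ) :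
    Ideal (MvPolynomial (Fin 3) K) :=
  ⨅ p ∈ X, (pointIdeal p) ^ m

/-- The Hilbert function of `R/I`: `H(t) = dim_K R_t - dim_K I_t`. -/
noncomputable def hilb {K : Type} [Field K] (I : Ideal (MvPolynomial (Fin 3) K)) (t : ℕ) : ℕ :=
  Module.finrank K ↥(MvPolynomial.homogeneousSubmodule (Fin 3) K t) -
    Module.finrank K ↥(Submodule.restrictScalars K (I : Submodule (MvPolynomial (Fin 3) K) (MvPolynomial (Fin 3) K)) ⊓ MvPolynomial.homogeneousSubmodule (Fin 3) K t)

/-- The Hilbert function extended to `ℤ`, with `H(t) = 0` for `t < 0`. -/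
noncomputable def hilbZ {K : Type} [Field K] (I : Ideal (MvPolynomial (Fin 3) K)) (t : ℤ) : ℤ :=
  if t < 0 then 0 else hilb I t.toNat

/-- The first difference `ΔH(t) = H(t) - H(t-1)` of the Hilbert function. -/
noncomputable def deltaHilb {K : Type} [Field K] (I : Ideal (MvPolynomial (Fin 3) K)) (t : ℤ) : ℤ :=
  hilbZ I t - hilbZ I (t - 1)

/-- `X` is a k-configuration of type `(d 0, …, d (s-1))` defined using the subsets
`Xs 0, …, Xs (s-1)` and the (distinct) lines `Ls 0, …, Ls (s-1)`. -/
structure IsKConfig {K : Type} [Field K] {s : ℕ} (X : Set (P2 K)) (d : Fin s → ℕ)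
    (Xs : Fin s → Set (P2 K)) (Ls : Fin s → ProjLine K) : Prop where
  one_le : ∀ i, 1 ≤ d i
  strictMono : StrictMono d
  lines_distinct : Function.Injective Ls
  union_eq : X = ⋃ i, Xs i
  card_eq : ∀ i, (Xs i).ncard = d i
  subset_line : ∀ i, Xs i ⊆ (Ls i).points
  not_mem : ∀ i j : Fin s, j < i → ∀ p ∈ Xs j, p ∉ (Ls i).points

/-!
The value at `t` of the Hilbert function of `Z` is the rank of the evaluation map from forms of
degree `t` to functions on `Z`. Suppose that `S` lies on a line `ℓ = 0` avoiding `Y` and has more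
than `t` points. Then every form of degree `t` vanishing on `S` is a multiple of `ℓ`, because the
multiples of `ℓ` already have the dimension of the space of forms vanishing at `t + 1` points of
`S`; therefore `ΔH_{Y ∪ S}(t) = ΔH_Y(t - 1) + 1`. Peeling off the lines of a k-configuration,
starting with `L_s`, gives `ΔH_X(t) = #{i | s - i ≤ t < d_i + s - i}`, so that `ΔH_X(d_s - 1)` is
the number of `i` for which `d_i, …, d_s` are consecutive integers.

The line `L_i` contains at most `d_i + s - i` points of `X`, and any other line at most `s`. If
`s < d_s`, a line with `d_s` points is therefore an `L_i` with `d_i, …, d_s` consecutive. If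
`s = d_s`, the type is `(1, …, s)`, so `ΔH_X(d_s - 1) = s` and `X` has at most `s (s + 1) / 2`
points. Since distinct lines share at most one point, Corrádi's lemma bounds the number of lines
with `s` points by `s + 1`.
-/

open MvPolynomial Module Finset
open scoped LinearAlgebra.Projectivization

section LinearForms

lemma aeval_mul_of_isHomogeneous {σ R A : Type*} [CommSemiring R] [CommSemiring A] [Algebra R A]
    {f : MvPolynomial σ R} {t : ℕ} (hf : f.IsHomogeneous t) (r : A) (x : σ → A) :
    aeval (fun i => r * x i) f = r ^ t * aeval x f := by
  simp only [aeval_def, eval₂_eq, mul_sum]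
  refine sum_congr rfl fun d hd => ?_
  rw [hf.degree_eq_sum_deg_support hd, ← prod_pow_eq_pow_sum, mul_left_comm, ← prod_mul_distrib]
  simp only [mul_pow]

lemma exists_isHomogeneous_one_eval_eq {ι R : Type*} [Finite ι] [CommSemiring R]
    (φ : Dual R (ι → R)) :
    ∃ ℓ : MvPolynomial ι R, ℓ.IsHomogeneous 1 ∧ ∀ v, eval v ℓ = φ v := by
  classical
  cases nonempty_fintype ι
  refine ⟨∑ i, C (φ (Pi.single i 1)) * X i,
    IsHomogeneous.sum _ _ _ fun i _ => isHomogeneous_C_mul_X _ i, fun v => ?_⟩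
  simp only [map_sum, map_mul, eval_C, eval_X]
  rw [φ.pi_apply_eq_sum_univ v]
  refine sum_congr rfl fun i _ => ?_
  rw [smul_eq_mul, mul_comm]
  congr 2
  ext j
  simp [Pi.single_apply, eq_comm]

variable {K ι : Type*} [Field K]

lemma exists_isHomogeneous_one_eval_rep_ne_zero (p : ℙ K (ι → K)) :
    ∃ ℓ : MvPolynomial ι K, ℓ.IsHomogeneous 1 ∧ eval p.rep ℓ ≠ 0 := by
  obtain ⟨i, hi⟩ := Function.ne_iff.1 p.rep_nonzero
  exact ⟨X i, isHomogeneous_X K i, by simpa using hi⟩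

lemma exists_isHomogeneous_one_separating [Finite ι] {p q : ℙ K (ι → K)} (hpq : p ≠ q) :
    ∃ ℓ : MvPolynomial ι K, ℓ.IsHomogeneous 1 ∧ eval p.rep ℓ ≠ 0 ∧ eval q.rep ℓ = 0 := by
  have hp : p.rep ∉ K ∙ q.rep := by
    rw [Submodule.mem_span_singleton, ← Projectivization.mk_eq_mk_iff' K _ _ p.rep_nonzero
      q.rep_nonzero, p.mk_rep, q.mk_rep]
    exact hpq
  obtain ⟨φ, hφp, hφq⟩ := Submodule.exists_le_ker_of_notMem hp
  obtain ⟨ℓ, hℓ, hℓφ⟩ := exists_isHomogeneous_one_eval_eq φ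
  exact ⟨ℓ, hℓ, by rwa [hℓφ], by rw [hℓφ]; exact hφq (Submodule.mem_span_singleton_self _)⟩

lemma exists_isHomogeneous_separating [Finite ι] {p : ℙ K (ι → K)} {S : Finset (ℙ K (ι → K))}
    (hp : p ∉ S) {t : ℕ} (ht : #S ≤ t) :
    ∃ f : MvPolynomial ι K, f.IsHomogeneous t ∧ eval p.rep f ≠ 0 ∧
      ∀ q ∈ S, eval q.rep f = 0 := by
  obtain ⟨ℓ, hℓ, hℓp⟩ := exists_isHomogeneous_one_eval_rep_ne_zero p
  have hsep (q : ℙ K (ι → K)) (hq : q ∈ S) :=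
    exists_isHomogeneous_one_separating (ne_of_mem_of_not_mem hq hp).symm
  choose! m hm hmp hmq using hsep
  refine ⟨(∏ q ∈ S, m q) * ℓ ^ (t - #S), ?_, ?_, fun q hq => ?_⟩
  · convert (IsHomogeneous.prod S m _ hm).mul (hℓ.pow (t - #S)) using 1
    simp [ht]
  · rw [map_mul, map_prod, map_pow]
    exact mul_ne_zero (prod_ne_zero_iff.2 hmp) (pow_ne_zero _ hℓp)
  · rw [map_mul, map_prod, prod_eq_zero hq (hmq q hq), zero_mul]

end LinearForms

section HomogeneousSubmodule

instance finite_homogeneousSubmodule {σ R : Type*} [Finite σ] [CommSemiring R] (t : ℕ) :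
    Module.Finite R (homogeneousSubmodule σ R t) :=
  Module.Finite.iff_fg.2 (homogeneousSubmodule_fg σ R t)

lemma finrank_homogeneousSubmodule (σ R : Type*) [Fintype σ] [CommRing R] [Nontrivial R] (t : ℕ) :
    finrank R (homogeneousSubmodule σ R t) = (Fintype.card σ + t - 1).choose t := by
  classical
  have hdeg : {d : σ →₀ ℕ | d.degree = t} = ((univ : Finset σ).finsuppAntidiag t : Set _) := by
    ext d
    simp [mem_finsuppAntidiag, Finsupp.degree_eq_sum]
  rw [homogeneousSubmodule_eq_finsupp_supported, hdeg]
  refine (finrank_eq_nat_card_basis (basisRestrictSupport R _)).trans ?_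
  rw [Nat.card_coe_set_eq, Set.ncard_coe_finset, card_finsuppAntidiag_nat_eq_choose, card_univ]

/-- Multiplication by a linear form `ℓ`, as a map from forms of degree `t` to forms of degree
`t + 1`. -/
noncomputable def mulLinearForm {σ R : Type*} [CommSemiring R] {ℓ : MvPolynomial σ R}
    (hℓ : ℓ.IsHomogeneous 1) (t : ℕ) :
    homogeneousSubmodule σ R t →ₗ[R] homogeneousSubmodule σ R (t + 1) :=
  (LinearMap.mulLeft R ℓ).restrict fun _ hf => add_comm 1 t ▸ hℓ.mul hf

lemma mulLinearForm_injective {σ R : Type*} [CommRing R] [IsDomain R] {ℓ : MvPolynomial σ R}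
    (hℓ : ℓ.IsHomogeneous 1) (hℓ0 : ℓ ≠ 0) (t : ℕ) : Function.Injective (mulLinearForm hℓ t) :=
  fun _ _ h => Subtype.ext (mul_left_cancel₀ hℓ0 (congrArg Subtype.val h))

end HomogeneousSubmodule

section EvalForms

variable {K ι : Type*} [Field K]

/-- Evaluation of the forms of degree `t` at the chosen representatives of the points of `Z`.
Its rank is the value at `t` of the Hilbert function of `Z`, and it is surjective exactly when
the points of `Z` impose independent conditions on forms of degree `t`. -/
noncomputable def evalForms (Z : Set (ℙ K (ι → K))) (t : ℕ) :
    homogeneousSubmodule ι K t →ₗ[K] (Z → K) :=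
  LinearMap.pi fun p => (aeval p.1.rep).toLinearMap ∘ₗ (homogeneousSubmodule ι K t).subtype

@[simp]
lemma evalForms_apply (Z : Set (ℙ K (ι → K))) (t : ℕ) (f : homogeneousSubmodule ι K t) (p : Z) :
    evalForms Z t f p = eval p.1.rep f.1 := by
  simp [evalForms, aeval_eq_eval]

lemma mem_ker_evalForms {Z : Set (ℙ K (ι → K))} {t : ℕ} {f : homogeneousSubmodule ι K t} :
    f ∈ LinearMap.ker (evalForms Z t) ↔ ∀ p ∈ Z, eval p.rep f.1 = 0 := by
  simp [funext_iff]

lemma evalForms_mulLinearForm {ℓ : MvPolynomial ι K} (hℓ : ℓ.IsHomogeneous 1)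
    (Z : Set (ℙ K (ι → K))) (t : ℕ) (f : homogeneousSubmodule ι K t) (p : Z) :
    evalForms Z (t + 1) (mulLinearForm hℓ t f) p = eval p.1.rep ℓ * evalForms Z t f p := by
  simp [mulLinearForm]

lemma evalForms_surjective_of_ncard_le [Finite ι] {S : Set (ℙ K (ι → K))} (hS : S.Finite) {t : ℕ}
    (ht : S.ncard ≤ t + 1) : Function.Surjective (evalForms S t) := by
  classical
  have := hS.fintype
  have hsep (p : S) : ∃ f : homogeneousSubmodule ι K t, evalForms S t f = Pi.single p 1 := by
    obtain ⟨f, hf, hfp, hf0⟩ := exists_isHomogeneous_separating (p := p.1)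
      (S := S.toFinset.erase p) (notMem_erase _ _) (t := t) (by
        rw [card_erase_of_mem (Set.mem_toFinset.2 p.2), ← Set.ncard_eq_toFinset_card']
        omega)
    refine ⟨(eval p.1.rep f)⁻¹ • ⟨f, hf⟩, funext fun q => ?_⟩
    obtain rfl | hqp := eq_or_ne q p
    · simp [smul_eval, inv_mul_cancel₀ hfp]
    · simp [smul_eval, hf0 q (by simpa [Subtype.ext_iff] using hqp), hqp]
  choose f hf using hsep
  intro c
  refine ⟨∑ p, c p • f p, ?_⟩
  simp only [map_sum, map_smul, hf]
  exact (pi_eq_sum_univ' c).symm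

lemma evalForms_union_surjective {Y S : Set (ℙ K (ι → K))} {ℓ : MvPolynomial ι K}
    (hℓ : ℓ.IsHomogeneous 1) (hℓS : ∀ p ∈ S, eval p.rep ℓ = 0) (hℓY : ∀ p ∈ Y, eval p.rep ℓ ≠ 0)
    {t : ℕ} (hY : Function.Surjective (evalForms Y t))
    (hS : Function.Surjective (evalForms S (t + 1))) :
    Function.Surjective (evalForms (Y ∪ S) (t + 1)) := by
  intro c
  obtain ⟨g, hg⟩ := hS fun p => c ⟨p, Or.inr p.2⟩
  obtain ⟨f, hf⟩ := hY fun p => (c ⟨p, Or.inl p.2⟩ - eval p.1.rep g.1) / eval p.1.rep ℓ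
  refine ⟨g + mulLinearForm hℓ t f, funext fun ⟨p, hp⟩ => ?_⟩
  rw [map_add, Pi.add_apply, evalForms_mulLinearForm]
  obtain hp | hp := hp
  · have hfp := congrFun hf ⟨p, hp⟩
    simp only [evalForms_apply] at hfp ⊢
    rw [hfp, mul_div_cancel₀ _ (hℓY p hp), add_sub_cancel]
  · have hgp := congrFun hg ⟨p, hp⟩
    simp only [evalForms_apply] at hgp ⊢
    rw [hgp, hℓS p hp, zero_mul, add_zero]

end EvalForms

section HilbertFunction

variable {K : Type} [Field K]

lemma mem_pointIdeal_iff_eval_rep_eq_zero {f : MvPolynomial (Fin 3) K} {t : ℕ}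
    (hf : f.IsHomogeneous t) (p : P2 K) : f ∈ pointIdeal p ↔ eval p.rep f = 0 := by
  have hle : pointIdeal p ≤ RingHom.ker (eval p.rep) := Ideal.span_le.2 fun _ hg => hg.2
  refine ⟨fun h => hle h, fun h => ?_⟩
  obtain ⟨i, hi⟩ := Function.ne_iff.1 p.rep_nonzero
  let q := Ideal.Quotient.mkₐ K (pointIdeal p)
  let ℓ : MvPolynomial (Fin 3) K := C (p.rep i)⁻¹ * X i
  have hq (j : Fin 3) : q (X j) = q ℓ * algebraMap K _ (p.rep j) := by
    rw [← q.commutes, ← map_mul, ← sub_eq_zero, ← map_sub]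
    refine Ideal.Quotient.eq_zero_iff_mem.2 (Ideal.subset_span ⟨?_, ?_⟩)
    · rw [algebraMap_eq, mul_comm]
      exact (isHomogeneous_X K j).sub ((isHomogeneous_C_mul_X _ i).C_mul _)
    · have hi' : p.rep i ≠ 0 := hi
      simp [ℓ, hi']
  have hqf : q f = q ℓ ^ t * algebraMap K _ (eval p.rep f) := by
    have hqX : q ∘ X = fun j => q ℓ * algebraMap K _ (p.rep j) := funext hq
    calc q f = aeval (q ∘ X) f := by rw [← aeval_unique q]
      _ = q ℓ ^ t * aeval (fun j => algebraMap K _ (p.rep j)) f := by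
        rw [hqX, aeval_mul_of_isHomogeneous hf]
      _ = q ℓ ^ t * algebraMap K _ (eval p.rep f) := by
        rw [← aeval_eq_eval]
        exact congrArg _ (aeval_algebraMap_apply _ p.rep f)
  rw [h, map_zero, mul_zero] at hqf
  exact Ideal.Quotient.eq_zero_iff_mem.1 hqf

lemma fatIdeal_one_inf_homogeneousSubmodule (Z : Set (P2 K)) (t : ℕ) :
    (fatIdeal Z 1).restrictScalars K ⊓ homogeneousSubmodule (Fin 3) K t =
      (LinearMap.ker (evalForms Z t)).map (homogeneousSubmodule (Fin 3) K t).subtype := by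
  ext f
  simp only [Submodule.mem_inf, Submodule.restrictScalars_mem, mem_homogeneousSubmodule,
    Submodule.mem_map, mem_ker_evalForms, Subtype.exists, Submodule.subtype_apply, fatIdeal,
    Submodule.mem_iInf, pow_one]
  constructor
  · rintro ⟨hfZ, hf⟩
    exact ⟨f, hf, fun p hp => (mem_pointIdeal_iff_eval_rep_eq_zero hf p).1 (hfZ p hp), rfl⟩
  · rintro ⟨f, hf, hfZ, rfl⟩
    exact ⟨fun p hp => (mem_pointIdeal_iff_eval_rep_eq_zero hf p).2 (hfZ p hp), hf⟩

lemma hilb_fatIdeal_one (Z : Set (P2 K)) (t : ℕ) :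
    hilb (fatIdeal Z 1) t = finrank K (LinearMap.range (evalForms Z t)) := by
  have hker := Submodule.finrank_map_subtype_eq (homogeneousSubmodule (Fin 3) K t)
    (LinearMap.ker (evalForms Z t))
  rw [← fatIdeal_one_inf_homogeneousSubmodule] at hker
  have hrank := (evalForms Z t).finrank_range_add_finrank_ker
  exact Nat.sub_eq_of_eq_add (by rw [← hrank, ← hker])

lemma hilb_fatIdeal_one_of_surjective {Z : Set (P2 K)} (hZ : Z.Finite) {t : ℕ}
    (h : Function.Surjective (evalForms Z t)) : hilb (fatIdeal Z 1) t = Z.ncard := by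
  have := hZ.fintype
  rw [hilb_fatIdeal_one, LinearMap.range_eq_top.2 h, finrank_top, finrank_fintype_fun_eq_card,
    Fintype.card_eq_nat_card, Nat.card_coe_set_eq]

lemma hilb_fatIdeal_one_zero {Z : Set (P2 K)} (hZ : Z.Nonempty) :
    hilb (fatIdeal Z 1) 0 = 1 := by
  obtain ⟨p, hp⟩ := hZ
  have hrank := (evalForms Z 0).finrank_range_le
  rw [finrank_homogeneousSubmodule, Nat.choose_zero_right, ← hilb_fatIdeal_one] at hrank
  refine le_antisymm hrank (Nat.one_le_iff_ne_zero.2 fun h0 => ?_)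
  rw [hilb_fatIdeal_one, Submodule.finrank_eq_zero, LinearMap.range_eq_bot] at h0
  have hone := congrFun (LinearMap.congr_fun h0 ⟨1, isHomogeneous_one _ _⟩) ⟨p, hp⟩
  simp at hone

lemma hilbZ_natCast (I : Ideal (MvPolynomial (Fin 3) K)) (t : ℕ) : hilbZ I t = hilb I t := by
  simp [hilbZ]

lemma hilbZ_of_neg (I : Ideal (MvPolynomial (Fin 3) K)) {t : ℤ} (ht : t < 0) : hilbZ I t = 0 :=
  if_pos ht

end HilbertFunction

section Lines

variable {K : Type} [Field K]

namespace ProjLine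

lemma mem_points {L : ProjLine K} {p : P2 K} : p ∈ L.points ↔ p.rep ∈ L.toSubmodule := by
  change p.submodule ≤ _ ↔ _
  rw [p.submodule_eq, Submodule.span_singleton_le_iff_mem]

lemma exists_equation (L : ProjLine K) :
    ∃ ℓ : MvPolynomial (Fin 3) K, ℓ.IsHomogeneous 1 ∧ ℓ ≠ 0 ∧
      ∀ p, p ∈ L.points ↔ eval p.rep ℓ = 0 := by
  have hlt : L.toSubmodule < ⊤ := lt_top_iff_ne_top.2 fun h => by
    have hrank := L.finrank_eq_two
    rw [h, finrank_top, finrank_fin_fun] at hrank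
    omega
  obtain ⟨φ, hφ, hle⟩ := Submodule.exists_le_ker_of_lt_top _ hlt
  have hker : L.toSubmodule = LinearMap.ker φ := by
    refine Submodule.eq_of_le_of_finrank_le hle ?_
    have hrank := φ.finrank_range_add_finrank_ker
    rw [LinearMap.range_eq_top.2 (LinearMap.surjective hφ), finrank_top, finrank_self,
      finrank_fin_fun] at hrank
    rw [L.finrank_eq_two]
    omega
  obtain ⟨ℓ, hℓ, hℓφ⟩ := exists_isHomogeneous_one_eval_eq φ
  refine ⟨ℓ, hℓ, ?_, fun p => by rw [mem_points, hker, LinearMap.mem_ker, hℓφ]⟩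
  rintro rfl
  exact hφ (LinearMap.ext fun v => by simpa using (hℓφ v).symm)

lemma subsingleton_points_inter {L M : ProjLine K} (hLM : L ≠ M) :
    (L.points ∩ M.points).Subsingleton := by
  rintro p ⟨hpL, hpM⟩ q ⟨hqL, hqM⟩
  by_contra hpq
  have hli := Projectivization.linearIndependent_pair_iff_ne.2 hpq
  have hspan (N : ProjLine K) (hp : p ∈ N.points) (hq : q ∈ N.points) :
      Submodule.span K (Set.range ![p.rep, q.rep]) = N.toSubmodule := by
    refine Submodule.eq_of_le_of_finrank_le (Submodule.span_le.2 ?_) ?_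
    · rintro _ ⟨i, rfl⟩
      fin_cases i
      exacts [mem_points.1 hp, mem_points.1 hq]
    · rw [N.finrank_eq_two, finrank_span_eq_card hli, Fintype.card_fin]
  refine hLM ?_
  have hsub := (hspan L hpL hqL).symm.trans (hspan M hpM hqM)
  cases L
  cases M
  simpa using hsub

end ProjLine

lemma finrank_homogeneousSubmodule_fin_three_succ (t : ℕ) :
    finrank K (homogeneousSubmodule (Fin 3) K (t + 1)) =
      finrank K (homogeneousSubmodule (Fin 3) K t) + (t + 2) := by
  have h (n : ℕ) : Fintype.card (Fin 3) + n - 1 = n + 2 := by rw [Fintype.card_fin]; omega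
  rw [finrank_homogeneousSubmodule, finrank_homogeneousSubmodule, h, h,
    show t + 1 + 2 = t + 2 + 1 by ring, Nat.choose_succ_succ, Nat.choose_succ_self_right]

lemma ker_evalForms_eq_range_mulLinearForm {ℓ : MvPolynomial (Fin 3) K} (hℓ : ℓ.IsHomogeneous 1)
    (hℓ0 : ℓ ≠ 0) {S : Set (P2 K)} (hS : ∀ p ∈ S, eval p.rep ℓ = 0) {t : ℕ}
    (ht : t + 1 < S.ncard) :
    LinearMap.ker (evalForms S (t + 1)) = LinearMap.range (mulLinearForm hℓ t) := by
  obtain ⟨T, hTS, hT⟩ := Set.exists_subset_card_eq (Nat.succ_le_of_lt ht)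
  have hTfin : T.Finite := Set.finite_of_ncard_ne_zero (by omega)
  have hle : LinearMap.range (mulLinearForm hℓ t) ≤ LinearMap.ker (evalForms S (t + 1)) := by
    rintro _ ⟨f, rfl⟩
    refine mem_ker_evalForms.2 fun p hp => ?_
    simp [mulLinearForm, hS p hp]
  have hST : LinearMap.ker (evalForms S (t + 1)) ≤ LinearMap.ker (evalForms T (t + 1)) :=
    fun f hf => mem_ker_evalForms.2 fun p hp => mem_ker_evalForms.1 hf p (hTS hp)
  have hrank := (evalForms T (t + 1)).finrank_range_add_finrank_ker
  rw [← hilb_fatIdeal_one, hilb_fatIdeal_one_of_surjective hTfin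
    (evalForms_surjective_of_ncard_le hTfin hT.le), hT,
    finrank_homogeneousSubmodule_fin_three_succ] at hrank
  refine (Submodule.eq_of_le_of_finrank_le hle ((Submodule.finrank_mono hST).trans ?_)).symm
  rw [LinearMap.finrank_range_of_inj (mulLinearForm_injective hℓ hℓ0 t)]
  omega

lemma ker_evalForms_union {ℓ : MvPolynomial (Fin 3) K} (hℓ : ℓ.IsHomogeneous 1)
    (hℓ0 : ℓ ≠ 0) {Y S : Set (P2 K)} (hS : ∀ p ∈ S, eval p.rep ℓ = 0)
    (hY : ∀ p ∈ Y, eval p.rep ℓ ≠ 0) {t : ℕ} (ht : t + 1 < S.ncard) :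
    LinearMap.ker (evalForms (Y ∪ S) (t + 1)) =
      (LinearMap.ker (evalForms Y t)).map (mulLinearForm hℓ t) := by
  ext f
  simp only [Submodule.mem_map, mem_ker_evalForms]
  constructor
  · intro hf
    obtain ⟨g, rfl⟩ : f ∈ LinearMap.range (mulLinearForm hℓ t) := by
      rw [← ker_evalForms_eq_range_mulLinearForm hℓ hℓ0 hS ht]
      exact mem_ker_evalForms.2 fun p hp => hf p (Or.inr hp)
    refine ⟨g, fun p hp => ?_, rfl⟩
    have hgp := hf p (Or.inl hp)
    simpa [mulLinearForm, hY p hp] using hgp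
  · rintro ⟨g, hg, rfl⟩ p (hp | hp)
    · simp [mulLinearForm, hg p hp]
    · simp [mulLinearForm, hS p hp]

lemma hilb_union_succ {L : ProjLine K} {Y S : Set (P2 K)} (hS : S ⊆ L.points)
    (hY : ∀ p ∈ Y, p ∉ L.points) {t : ℕ} (ht : t + 1 < S.ncard) :
    hilb (fatIdeal (Y ∪ S) 1) (t + 1) = hilb (fatIdeal Y 1) t + (t + 2) := by
  obtain ⟨ℓ, hℓ, hℓ0, hℓL⟩ := L.exists_equation
  have hker := ker_evalForms_union hℓ hℓ0 (fun p hp => (hℓL p).1 (hS hp))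
    (fun p hp => mt (hℓL p).2 (hY p hp)) ht
  have hunion := (evalForms (Y ∪ S) (t + 1)).finrank_range_add_finrank_ker
  have hrank := (evalForms Y t).finrank_range_add_finrank_ker
  rw [hker, ← (Submodule.equivMapOfInjective _ (mulLinearForm_injective hℓ hℓ0 t) _).finrank_eq,
    finrank_homogeneousSubmodule_fin_three_succ] at hunion
  rw [hilb_fatIdeal_one, hilb_fatIdeal_one]
  omega

lemma hilbZ_union {L : ProjLine K} {Y S : Set (P2 K)} (hS : S ⊆ L.points)
    (hY : ∀ p ∈ Y, p ∉ L.points) {t : ℤ} (ht0 : -1 ≤ t) (ht : t < S.ncard) :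
    hilbZ (fatIdeal (Y ∪ S) 1) t = hilbZ (fatIdeal Y 1) (t - 1) + (t + 1) := by
  obtain rfl | ht0 := ht0.eq_or_lt
  · simp [hilbZ_of_neg]
  lift t to ℕ using by omega
  obtain _ | t := t
  · have hne : S.Nonempty := Set.nonempty_of_ncard_ne_zero (by omega)
    rw [hilbZ_natCast, hilb_fatIdeal_one_zero hne.inr, hilbZ_of_neg _ (by simp)]
    simp
  · rw [hilbZ_natCast, Nat.cast_succ, add_sub_cancel_right, hilbZ_natCast,
      hilb_union_succ hS hY (by omega)]
    push_cast
    ring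

lemma deltaHilb_union {L : ProjLine K} {Y S : Set (P2 K)} (hS : S ⊆ L.points)
    (hY : ∀ p ∈ Y, p ∉ L.points) {t : ℤ} (ht0 : 0 ≤ t) (ht : t < S.ncard) :
    deltaHilb (fatIdeal (Y ∪ S) 1) t = deltaHilb (fatIdeal Y 1) (t - 1) + 1 := by
  rw [deltaHilb, deltaHilb, hilbZ_union hS hY (by omega) ht,
    hilbZ_union hS hY (by omega) (by omega)]
  ring

end Lines

section StrictMono

lemma monotone_add_rev_of_strictMono {n : ℕ} {d : Fin n → ℕ} (hd : StrictMono d) :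
    Monotone fun i => d i + (i.rev : ℕ) := by
  obtain _ | n := n
  · exact fun i => i.elim0
  refine Fin.monotone_iff_le_succ.2 fun i => ?_
  have hlt := hd i.castSucc_lt_succ
  simp only [Fin.val_rev, Fin.val_castSucc, Fin.val_succ]
  omega

/-- The indices `i` of a type `d` such that `d i, d (i + 1), …, d (last n)` are consecutive
integers. -/
def consecutiveTail {n : ℕ} (d : Fin (n + 1) → ℕ) : Finset (Fin (n + 1)) :=
  {i | d i + i.rev = d (Fin.last n)}

lemma mem_consecutiveTail {n : ℕ} {d : Fin (n + 1) → ℕ} {i : Fin (n + 1)} :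
    i ∈ consecutiveTail d ↔ d i + i.rev = d (Fin.last n) := by
  simp [consecutiveTail]

end StrictMono

namespace IsKConfig

variable {K : Type} [Field K] {X : Set (P2 K)}

section Parts

variable {s : ℕ} {d : Fin s → ℕ} {Xs : Fin s → Set (P2 K)} {Ls : Fin s → ProjLine K}

lemma finite_part (hX : IsKConfig X d Xs Ls) (i : Fin s) : (Xs i).Finite :=
  Set.finite_of_ncard_pos (hX.card_eq i ▸ hX.one_le i)

lemma finite (hX : IsKConfig X d Xs Ls) : X.Finite :=
  hX.union_eq ▸ Set.finite_iUnion hX.finite_part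

lemma ncard_le_sum (hX : IsKConfig X d Xs Ls) : X.ncard ≤ ∑ i, d i := by
  simp only [hX.union_eq, ← hX.card_eq]
  exact Set.ncard_iUnion_le_of_fintype Xs

end Parts

section Last

variable {n : ℕ} {d : Fin (n + 1) → ℕ} {Xs : Fin (n + 1) → Set (P2 K)}
  {Ls : Fin (n + 1) → ProjLine K}

lemma castSucc (hX : IsKConfig X d Xs Ls) :
    IsKConfig (⋃ i : Fin n, Xs i.castSucc) (d ∘ Fin.castSucc) (Xs ∘ Fin.castSucc)
      (Ls ∘ Fin.castSucc) where
  one_le _ := hX.one_le _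
  strictMono := hX.strictMono.comp Fin.strictMono_castSucc
  lines_distinct := hX.lines_distinct.comp (Fin.castSucc_injective n)
  union_eq := rfl
  card_eq _ := hX.card_eq _
  subset_line _ := hX.subset_line _
  not_mem _ _ hij := hX.not_mem _ _ (Fin.castSucc_lt_castSucc_iff.2 hij)

lemma eq_iUnion_castSucc_union_last (hX : IsKConfig X d Xs Ls) :
    X = (⋃ i : Fin n, Xs i.castSucc) ∪ Xs (Fin.last n) := by
  rw [hX.union_eq]
  ext p
  simp [Fin.exists_fin_succ']

lemma notMem_line_last (hX : IsKConfig X d Xs Ls) :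
    ∀ p ∈ ⋃ i : Fin n, Xs i.castSucc, p ∉ (Ls (Fin.last n)).points := by
  intro p hp
  obtain ⟨i, hi⟩ := Set.mem_iUnion.1 hp
  exact hX.not_mem _ _ i.castSucc_lt_last p hi

lemma add_rev_le (hX : IsKConfig X d Xs Ls) (i : Fin (n + 1)) :
    d i + i.rev ≤ d (Fin.last n) := by
  simpa using monotone_add_rev_of_strictMono hX.strictMono i.le_last

lemma succ_le_last (hX : IsKConfig X d Xs Ls) : n + 1 ≤ d (Fin.last n) := by
  have hle := hX.add_rev_le 0
  have hone := hX.one_le 0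
  rw [Fin.rev_zero, Fin.val_last] at hle
  omega

end Last

section RobertsRoitman

variable {s : ℕ} {d : Fin s → ℕ} {Xs : Fin s → Set (P2 K)} {Ls : Fin s → ProjLine K}

lemma evalForms_surjective (hX : IsKConfig X d Xs Ls) {t : ℕ} (ht : ∀ i, d i ≤ t + 1) :
    Function.Surjective (evalForms X t) := by
  induction s generalizing X t with
  | zero =>
    have hcard := hX.ncard_le_sum
    rw [Fin.sum_univ_zero] at hcard
    exact evalForms_surjective_of_ncard_le hX.finite (by omega)
  | succ n ih =>
    obtain _ | t := t
    · obtain rfl : n = 0 := by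
        have hn := hX.succ_le_last
        have hlast := ht (Fin.last n)
        omega
      have hcard := hX.ncard_le_sum
      rw [Fin.sum_univ_one] at hcard
      exact evalForms_surjective_of_ncard_le hX.finite (hcard.trans (ht 0))
    · obtain ⟨ℓ, hℓ, -, hℓL⟩ := (Ls (Fin.last n)).exists_equation
      rw [hX.eq_iUnion_castSucc_union_last]
      refine evalForms_union_surjective hℓ (fun p hp => (hℓL p).1 (hX.subset_line _ hp))
        (fun p hp => mt (hℓL p).2 (hX.notMem_line_last p hp)) (ih hX.castSucc fun i => ?_)
        (evalForms_surjective_of_ncard_le (hX.finite_part _) (hX.card_eq _ ▸ ht _))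
      have hlt := hX.strictMono i.castSucc_lt_last
      have hlast := ht (Fin.last n)
      rw [Function.comp_apply]
      omega

lemma hilbZ_eq_ncard (hX : IsKConfig X d Xs Ls) {t : ℤ} (ht : ∀ i, d i ≤ t + 1) :
    hilbZ (fatIdeal X 1) t = X.ncard := by
  obtain ht0 | ht0 := lt_or_ge t 0
  · have : IsEmpty (Fin s) := ⟨fun i => by
      have hle := ht i
      have hone := hX.one_le i
      omega⟩
    rw [hilbZ_of_neg _ ht0, hX.union_eq, Set.iUnion_of_empty, Set.ncard_empty, Nat.cast_zero]
  · lift t to ℕ using ht0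
    rw [hilbZ_natCast, hilb_fatIdeal_one_of_surjective hX.finite
      (hX.evalForms_surjective fun i => by exact_mod_cast ht i)]

lemma deltaHilb_eq_zero (hX : IsKConfig X d Xs Ls) {t : ℤ} (ht : ∀ i, d i ≤ t) :
    deltaHilb (fatIdeal X 1) t = 0 := by
  rw [deltaHilb, hX.hilbZ_eq_ncard fun i => (ht i).trans (by omega),
    hX.hilbZ_eq_ncard fun i => (ht i).trans (by omega), sub_self]

/-- The formula of Roberts and Roitman; `i.rev` is `s - i` when indices start at `1`. -/
theorem deltaHilb_eq_card (hX : IsKConfig X d Xs Ls) (t : ℤ) :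
    deltaHilb (fatIdeal X 1) t = #{i : Fin s | (i.rev : ℤ) ≤ t ∧ t < d i + i.rev} := by
  induction s generalizing X t with
  | zero => rw [hX.deltaHilb_eq_zero fun i => i.elim0]; simp
  | succ n ih =>
    obtain ht0 | ht0 := lt_or_ge t 0
    · rw [deltaHilb, hilbZ_of_neg _ ht0, hilbZ_of_neg _ (by omega), filter_false_of_mem]
      · simp
      · intro i _
        omega
    obtain ht | ht := le_or_gt (d (Fin.last n) : ℤ) t
    · have hle (i : Fin (n + 1)) : (d i : ℤ) + i.rev ≤ t :=
        le_trans (by exact_mod_cast hX.add_rev_le i) ht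
      rw [hX.deltaHilb_eq_zero fun i => by linarith [hle i], filter_false_of_mem]
      · simp
      · intro i _
        have := hle i
        omega
    · have hunion := deltaHilb_union (hX.subset_line _) hX.notMem_line_last ht0
        (hX.card_eq _ ▸ ht)
      rw [hX.eq_iUnion_castSucc_union_last, hunion, ih hX.castSucc, card_filter, card_filter,
        Fin.sum_univ_castSucc]
      simp [Fin.rev_castSucc, ht0, ht, sub_lt_iff_lt_add, add_assoc]

lemma deltaHilb_last_sub_one {n : ℕ} {d : Fin (n + 1) → ℕ} {Xs : Fin (n + 1) → Set (P2 K)}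
    {Ls : Fin (n + 1) → ProjLine K} (hX : IsKConfig X d Xs Ls) :
    deltaHilb (fatIdeal X 1) (d (Fin.last n) - 1) = #(consecutiveTail d) := by
  rw [hX.deltaHilb_eq_card]
  congr 2
  ext i
  have hle := hX.add_rev_le i
  have hone := hX.one_le i
  simp only [mem_filter, mem_univ, true_and, mem_consecutiveTail]
  omega

end RobertsRoitman

end IsKConfig

section Corradi

variable {ι α : Type*} [DecidableEq α] {F : Finset ι} {U : Finset α} {B : ι → Finset α}

lemma sum_card_filter_mem_eq_sum_card (hBU : ∀ i ∈ F, B i ⊆ U) :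
    ∑ p ∈ U, #{i ∈ F | p ∈ B i} = ∑ i ∈ F, #(B i) := by
  refine (sum_card_bipartiteAbove_eq_sum_card_bipartiteBelow fun p i => p ∈ B i).trans ?_
  refine sum_congr rfl fun i hi => ?_
  rw [bipartiteBelow, filter_mem_eq_inter, inter_eq_right.2 (hBU i hi)]

lemma sum_sq_card_filter_mem_eq_sum_card_inter (hBU : ∀ i ∈ F, B i ⊆ U) :
    ∑ p ∈ U, #{i ∈ F | p ∈ B i} ^ 2 = ∑ i ∈ F, ∑ j ∈ F, #(B i ∩ B j) := by
  rw [← sum_product', ← sum_card_filter_mem_eq_sum_card fun ij hij =>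
    inter_subset_left.trans (hBU ij.1 (mem_product.1 hij).1)]
  refine sum_congr rfl fun p _ => ?_
  simp only [mem_inter]
  rw [filter_product (fun i => p ∈ B i) fun j => p ∈ B j, card_product, sq]

/-- Corrádi's lemma: Cauchy–Schwarz applied to the number of members of the family through each
point. -/
theorem card_mul_sq_le_of_card_inter_le {r k : ℕ} (hBU : ∀ i ∈ F, B i ⊆ U)
    (hr : ∀ i ∈ F, #(B i) = r) (hk : ∀ i ∈ F, ∀ j ∈ F, i ≠ j → #(B i ∩ B j) ≤ k) :
    #F * r ^ 2 ≤ #U * (r + (#F - 1) * k) := by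
  classical
  have hrow (i) (hi : i ∈ F) : ∑ j ∈ F, #(B i ∩ B j) ≤ r + (#F - 1) * k := by
    rw [← add_sum_erase F _ hi, inter_self, hr i hi, ← card_erase_of_mem hi, ← smul_eq_mul]
    exact Nat.add_le_add_left (sum_le_card_nsmul _ _ _ fun j hj =>
      hk i hi j (mem_of_mem_erase hj) (ne_of_mem_erase hj).symm) r
  obtain hF | hF := (#F).eq_zero_or_pos
  · simp [hF]
  refine Nat.le_of_mul_le_mul_left ?_ hF
  calc #F * (#F * r ^ 2) = (∑ i ∈ F, #(B i)) ^ 2 := by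
        rw [sum_congr rfl hr, sum_const, smul_eq_mul]; ring
    _ = (∑ p ∈ U, #{i ∈ F | p ∈ B i}) ^ 2 := by rw [sum_card_filter_mem_eq_sum_card hBU]
    _ ≤ #U * ∑ p ∈ U, #{i ∈ F | p ∈ B i} ^ 2 := sq_sum_le_card_mul_sum_sq
    _ = #U * ∑ i ∈ F, ∑ j ∈ F, #(B i ∩ B j) := by
        rw [sum_sq_card_filter_mem_eq_sum_card_inter hBU]
    _ ≤ #U * (#F * (r + (#F - 1) * k)) :=
        Nat.mul_le_mul_left _ (sum_le_card_nsmul _ _ _ hrow)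
    _ = #F * (#U * (r + (#F - 1) * k)) := by ring

end Corradi

section RichLines

variable {K : Type} [Field K]

lemma ProjLine.ncard_inter_points_le_one {L M : ProjLine K} (hLM : L ≠ M) {S : Set (P2 K)}
    (hS : S ⊆ L.points) : (S ∩ M.points).ncard ≤ 1 := by
  have hsub : (S ∩ M.points).Subsingleton :=
    (subsingleton_points_inter hLM).anti (Set.inter_subset_inter_left _ hS)
  exact (Set.ncard_le_one hsub.finite).2 fun _ hp _ hq => hsub hp hq

lemma finite_setOf_two_le_ncard_inter {X : Set (P2 K)} (hX : X.Finite) :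
    {L : ProjLine K | 2 ≤ (X ∩ L.points).ncard}.Finite := by
  refine Set.Finite.of_injOn (f := fun L : ProjLine K => X ∩ L.points)
    (fun L _ => Set.inter_subset_left) (fun L hL M _ hLM => ?_) hX.finite_subsets
  by_contra hne
  have hle := ProjLine.ncard_inter_points_le_one hne (S := X ∩ L.points) Set.inter_subset_right
  have hinter : X ∩ L.points ∩ M.points = X ∩ L.points :=
    Set.inter_eq_left.2 fun p hp => (hLM.subset hp).2
  rw [hinter] at hle
  exact absurd (Set.mem_ofPred.1 hL) (by omega)

namespace IsKConfig

variable {X : Set (P2 K)}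

section

variable {s : ℕ} {d : Fin s → ℕ} {Xs : Fin s → Set (P2 K)}
  {Ls : Fin s → ProjLine K}

lemma ncard_inter_le_of_forall_ne (hX : IsKConfig X d Xs Ls) {L : ProjLine K}
    (hL : ∀ i, Ls i ≠ L) : (X ∩ L.points).ncard ≤ s := by
  rw [hX.union_eq, Set.iUnion_inter]
  calc (⋃ i, Xs i ∩ L.points).ncard ≤ ∑ i, (Xs i ∩ L.points).ncard :=
        Set.ncard_iUnion_le_of_fintype _
    _ ≤ ∑ _ : Fin s, 1 := sum_le_sum fun i _ =>
        ProjLine.ncard_inter_points_le_one (hL i) (hX.subset_line i)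
    _ = s := by simp

lemma ncard_inter_line_le (hX : IsKConfig X d Xs Ls) (i : Fin s) :
    (X ∩ (Ls i).points).ncard ≤ d i + i.rev := by
  have hsub : X ∩ (Ls i).points ⊆ Xs i ∪ ⋃ j ∈ Ioi i, Xs j ∩ (Ls i).points := by
    rintro p ⟨hpX, hpL⟩
    rw [hX.union_eq] at hpX
    obtain ⟨j, hj⟩ := Set.mem_iUnion.1 hpX
    obtain hji | rfl | hij := lt_trichotomy j i
    · exact absurd hpL (hX.not_mem i j hji p hj)
    · exact Or.inl hj
    · exact Or.inr (Set.mem_biUnion (mem_Ioi.2 hij) ⟨hj, hpL⟩)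
  have hle (j : Fin s) (hj : j ∈ Ioi i) : (Xs j ∩ (Ls i).points).ncard ≤ 1 :=
    ProjLine.ncard_inter_points_le_one (hX.lines_distinct.ne (mem_Ioi.1 hj).ne')
      (hX.subset_line j)
  calc (X ∩ (Ls i).points).ncard
      ≤ (Xs i ∪ ⋃ j ∈ Ioi i, Xs j ∩ (Ls i).points).ncard :=
        Set.ncard_le_ncard hsub ((hX.finite_part i).union
          ((Ioi i).finite_toSet.biUnion fun j _ => (hX.finite_part j).inter_of_left _))
    _ ≤ (Xs i).ncard + (⋃ j ∈ Ioi i, Xs j ∩ (Ls i).points).ncard := Set.ncard_union_le _ _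
    _ ≤ d i + ∑ j ∈ Ioi i, (Xs j ∩ (Ls i).points).ncard :=
        add_le_add (hX.card_eq i).le (Finset.set_ncard_biUnion_le _ _)
    _ ≤ d i + i.rev := by
        refine Nat.add_le_add_left ((sum_le_card_nsmul _ _ _ hle).trans_eq ?_) _
        rw [Fin.card_Ioi, smul_eq_mul, mul_one, Fin.val_rev]
        omega

end

variable {n : ℕ} {d : Fin (n + 1) → ℕ} {Xs : Fin (n + 1) → Set (P2 K)}
  {Ls : Fin (n + 1) → ProjLine K}

lemma two_mul_ncard_add_le (hX : IsKConfig X d Xs Ls) :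
    2 * X.ncard + (n + 1) * n ≤ 2 * ((n + 1) * d (Fin.last n)) := by
  have hrev : (∑ i : Fin (n + 1), (i.rev : ℕ)) * 2 = (n + 1) * n :=
    calc (∑ i : Fin (n + 1), (i.rev : ℕ)) * 2 = (∑ i : Fin (n + 1), (i : ℕ)) * 2 :=
          congrArg (· * 2) (Equiv.sum_comp Fin.revPerm _)
      _ = (n + 1) * n := by
          rw [Fin.sum_univ_eq_sum_range fun i => i, sum_range_id_mul_two, Nat.add_sub_cancel]
  have hle : ∑ i, d i + ∑ i : Fin (n + 1), (i.rev : ℕ) ≤ (n + 1) * d (Fin.last n) := by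
    rw [← sum_add_distrib]
    exact (sum_le_card_nsmul univ _ _ fun i _ => hX.add_rev_le i).trans_eq (by simp)
  have hcard := hX.ncard_le_sum
  linarith

lemma consecutiveTail_eq_univ (hX : IsKConfig X d Xs Ls) (h : n + 1 = d (Fin.last n)) :
    consecutiveTail d = univ := by
  refine eq_univ_of_forall fun i => mem_consecutiveTail.2 (le_antisymm (hX.add_rev_le i) ?_)
  have hle : d 0 + (Fin.rev 0 : Fin (n + 1)) ≤ d i + i.rev :=
    monotone_add_rev_of_strictMono hX.strictMono i.zero_le
  have hone := hX.one_le 0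
  rw [Fin.rev_zero, Fin.val_last] at hle
  omega

lemma setOf_ncard_inter_eq_last_subset (hX : IsKConfig X d Xs Ls) (h : n + 1 < d (Fin.last n)) :
    {L : ProjLine K | (X ∩ L.points).ncard = d (Fin.last n)} ⊆ Ls '' consecutiveTail d := by
  intro L hL
  rw [Set.mem_ofPred] at hL
  obtain ⟨i, rfl⟩ : ∃ i, Ls i = L := by
    by_contra! hne
    have hle := hX.ncard_inter_le_of_forall_ne hne
    omega
  exact ⟨i, mem_consecutiveTail.2
    ((hX.add_rev_le i).antisymm (hL ▸ hX.ncard_inter_line_le i)), rfl⟩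

end IsKConfig

lemma card_mul_sq_le_of_forall_ncard_inter_eq {X : Set (P2 K)} (hX : X.Finite)
    {F : Finset (ProjLine K)} {r : ℕ} (hF : ∀ L ∈ F, (X ∩ L.points).ncard = r) :
    #F * r ^ 2 ≤ X.ncard * (r + (#F - 1)) := by
  classical
  lift X to Finset (P2 K) using hX
  let B (L : ProjLine K) : Finset (P2 K) := {p ∈ X | p ∈ L.points}
  have hB (L : ProjLine K) : (B L : Set (P2 K)) = ↑X ∩ L.points := coe_filter _ _
  have hinter (L) (_ : L ∈ F) (M) (_ : M ∈ F) (hLM : L ≠ M) : #(B L ∩ B M) ≤ 1 := by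
    rw [← Set.ncard_coe_finset, coe_inter, hB, hB]
    exact (Set.ncard_le_ncard (Set.inter_subset_inter_right _ Set.inter_subset_right)
      ((X.finite_toSet.inter_of_left _).inter_of_left _)).trans
      (ProjLine.ncard_inter_points_le_one hLM Set.inter_subset_right)
  have hcorradi := card_mul_sq_le_of_card_inter_le (B := B) (r := r)
    (fun L _ => filter_subset _ X) (fun L hL => by rw [← hF L hL, ← hB, Set.ncard_coe_finset])
    hinter
  rwa [mul_one, ← Set.ncard_coe_finset X] at hcorradi

lemma ncard_setOf_ncard_inter_eq_le {X : Set (P2 K)} (hX : X.Finite) {s : ℕ} (hs : 2 ≤ s)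
    (hcard : 2 * X.ncard ≤ s * (s + 1)) :
    {L : ProjLine K | (X ∩ L.points).ncard = s}.ncard ≤ s + 1 := by
  have hfin : {L : ProjLine K | (X ∩ L.points).ncard = s}.Finite :=
    (finite_setOf_two_le_ncard_inter hX).subset fun L hL => hs.trans_eq hL.symm
  have hcorradi := card_mul_sq_le_of_forall_ncard_inter_eq hX (F := hfin.toFinset) (r := s)
    fun L hL => hfin.mem_toFinset.1 hL
  rw [Set.ncard_eq_toFinset_card _ hfin]
  generalize #hfin.toFinset = N at hcorradi ⊢
  obtain _ | m := N
  · omega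
  rw [Nat.add_sub_cancel] at hcorradi
  obtain ⟨k, rfl⟩ : ∃ k, s = k + 1 := ⟨s - 1, by omega⟩
  have hcancel : 2 * ((m + 1) * (k + 1)) ≤ (k + 2) * (k + 1 + m) := by
    refine Nat.le_of_mul_le_mul_left (?_ : (k + 1) * _ ≤ (k + 1) * _) k.succ_pos
    calc (k + 1) * (2 * ((m + 1) * (k + 1))) = 2 * ((m + 1) * (k + 1) ^ 2) := by ring
      _ ≤ 2 * (X.ncard * (k + 1 + m)) := Nat.mul_le_mul_left 2 hcorradi
      _ = 2 * X.ncard * (k + 1 + m) := by ring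
      _ ≤ (k + 1) * (k + 2) * (k + 1 + m) := Nat.mul_le_mul_right _ hcard
      _ = (k + 1) * ((k + 2) * (k + 1 + m)) := by ring
  have hmk : k * m ≤ k * (k + 1) := by linarith
  exact Nat.succ_le_succ (Nat.le_of_mul_le_mul_left hmk (by omega))

end RichLines

theorem kconfig_reduced_bound_general {K : Type} [Field K] {s : ℕ} (hs : 0 < s)
    (X : Set (P2 K)) (d : Fin s → ℕ) (Xs : Fin s → Set (P2 K)) (Ls : Fin s → ProjLine K)
    (hX : IsKConfig X d Xs Ls)
    (ds : ℕ) (hds : ds = d ⟨s - 1, Nat.sub_lt hs Nat.one_pos⟩)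
    (hne : ¬ (s = 1 ∧ ds = 1)) :
    {L : ProjLine K | (X ∩ L.points).ncard = ds}.Finite ∧
      ({L : ProjLine K | (X ∩ L.points).ncard = ds}.ncard : ℤ) ≤
        deltaHilb (fatIdeal X 1) ((ds : ℤ) - 1) + 1 := by
  obtain ⟨n, rfl⟩ := Nat.exists_eq_add_one_of_ne_zero hs.ne'
  replace hds : ds = d (Fin.last n) := hds
  subst hds
  have hle := hX.succ_le_last
  refine ⟨(finite_setOf_two_le_ncard_inter hX.finite).subset fun L hL => ?_, ?_⟩
  · rw [Set.mem_ofPred] at hL ⊢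
    omega
  rw [hX.deltaHilb_last_sub_one]
  norm_cast
  obtain h | h := hle.eq_or_lt
  · rw [hX.consecutiveTail_eq_univ h, card_univ, Fintype.card_fin, ← h]
    have hcard := hX.two_mul_ncard_add_le
    rw [← h] at hcard
    exact ncard_setOf_ncard_inter_eq_le hX.finite (by omega) (by linarith)
  · calc _ ≤ (Ls '' consecutiveTail d).ncard :=
          Set.ncard_le_ncard (hX.setOf_ncard_inter_eq_last_subset h) (Set.toFinite _)
      _ ≤ #(consecutiveTail d) :=
          (Set.ncard_image_le (Set.toFinite _)).trans_eq (Set.ncard_coe_finset _)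
      _ ≤ _ := Nat.le_succ _

/-- **Remark (reduced Hilbert function bound).** For a k-configuration `X` of
type `(d₁,…,d_s) ≠ (1)`, the number of lines containing exactly `d_s` points of
`X` is at most `ΔH_X(d_s − 1) + 1`. -/
theorem kconfig_reduced_bound {K : Type} [Field K] [IsAlgClosed K] {s : ℕ} (hs : 0 < s)
    (X : Set (P2 K)) (d : Fin s → ℕ) (Xs : Fin s → Set (P2 K)) (Ls : Fin s → ProjLine K)
    (hX : IsKConfig X d Xs Ls)
    (ds : ℕ) (hds : ds = d ⟨s - 1, Nat.sub_lt hs Nat.one_pos⟩)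
    (hne : ¬ (s = 1 ∧ ds = 1)) :
    {L : ProjLine K | (X ∩ L.points).ncard = ds}.Finite ∧
      ({L : ProjLine K | (X ∩ L.points).ncard = ds}.ncard : ℤ) ≤
        deltaHilb (fatIdeal X 1) ((ds : ℤ) - 1) + 1 :=
  kconfig_reduced_bound_general hs X d Xs Ls hX ds hds hne
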